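/- Let f be a strategyproof, 0-randomly dictatorial SDS on n voters and m alternatives that is β-ex post efficient for some β ∈ [0,1] and that can be represented as a convex combination of unilaterals. Then there exists a strategyproof, 0-randomly dictatorial SDS f* on m(m−1)/2 voters (and the same m alternatives) that can be represented as a convex combination of unilaterals, is β-ex post efficient for the same β, and satisfies: (i) for every voter i there is a pair of alternatives {x_i, y_i} such that f* is 0-randomly dictatorial for x_i, y_i in voter i (i.e., f*(R) = f*(R^{i:y_i x_i}) for every profile R in which voter i ranks x_i first and y_i second), and {x_i, y_i} ≠ {x_j, y_j} whenever i ≠ j; (ii) there is a constant δ such that f*(R^{i:cb}, c) − f*(R, c) = δ for all voters i, all alternatives a, b with {a,b} = {x_i, y_i}, all c ∉ {x_i, y_i}, and all profiles R in which voter i ranks a first, b second, and c third; (iii) there is a scoring vector (a_1,…,a_m) with a_1 = a_2 ≥ 0 and a_3 ≥ … ≥ a_m ≥ 0 such that f*(R, x) = ∑_{i} a_{r_i(x)} for every profile R in which every voter i ranks x_i and y_i as his two best alternatives, where r_i(x) = |{y ∈ A : y ⪰_i x}|. -/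

import Mathlib

open Finset

noncomputable section

/-- A preference profile: each voter's strict linear order on the `m`
alternatives is encoded as a ranking permutation, where `R i x` is the rank of
alternative `x` for voter `i` (rank `0` = most preferred). Voter `i` strictly
prefers `x` to `y` iff `R i x < R i y`. -/
abbrev Profile (n m : ℕ) := Fin n → Equiv.Perm (Fin m)

/-- `F R x` is the probability that the social decision scheme `F` assigns to
alternative `x` at profile `R`; `IsSDS F` says every `F R` is a lottery. -/
def IsSDS {n m : ℕ} (F : Profile n m → Fin m → ℝ) : Prop :=
  (∀ R x, 0 ≤ F R x) ∧ ∀ R, ∑ x, F R x = 1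

/-- Stochastic-dominance preference of voter `i` (with preferences as in `R`):
lottery `p` is weakly preferred to lottery `q`. -/
def SDPref {n m : ℕ} (R : Profile n m) (i : Fin n) (p q : Fin m → ℝ) : Prop :=
  ∀ x : Fin m,
    ∑ y ∈ univ.filter (fun y => R i y < R i x), q y ≤
      ∑ y ∈ univ.filter (fun y => R i y < R i x), p y

/-- Strategyproofness: the truthful outcome is SD-preferred to any outcome
obtainable by a unilateral deviation. -/
def Strategyproof {n m : ℕ} (F : Profile n m → Fin m → ℝ) : Prop :=
  ∀ (R R' : Profile n m) (i : Fin n),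
    (∀ j, j ≠ i → R j = R' j) → SDPref R i (F R) (F R')

/-- Anonymity: permuting the voters does not change the outcome. -/
def Anonymous {n m : ℕ} (F : Profile n m → Fin m → ℝ) : Prop :=
  ∀ (π : Equiv.Perm (Fin n)) (R : Profile n m), F (fun i => R (π i)) = F R

/-- The profile obtained from `R` by relabeling the alternatives by `τ`
(in `relabel τ R`, alternative `τ x` gets the rank that `x` has in `R`). -/
def relabel {n m : ℕ} (τ : Equiv.Perm (Fin m)) (R : Profile n m) : Profile n m :=
  fun i => τ.symm.trans (R i)

/-- Neutrality: relabeling the alternatives permutes the outcome accordingly. -/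
def Neutral {n m : ℕ} (F : Profile n m → Fin m → ℝ) : Prop :=
  ∀ (τ : Equiv.Perm (Fin m)) (R : Profile n m) (x : Fin m),
    F (relabel τ R) (τ x) = F R x

/-- The supporting size `n_{xy}(R)`: the number of voters preferring `x` to `y`. -/
def suppSize {n m : ℕ} (R : Profile n m) (x y : Fin m) : ℕ :=
  (univ.filter (fun i => R i x < R i y)).card

/-- `x` is the Condorcet winner of `R`. -/
def CondorcetWinner {n m : ℕ} (R : Profile n m) (x : Fin m) : Prop :=
  ∀ y, y ≠ x → suppSize R y x < suppSize R x y

/-- `α`-Condorcet-consistency. -/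
def CondorcetConsistent {n m : ℕ} (F : Profile n m → Fin m → ℝ) (α : ℝ) : Prop :=
  ∀ R x, CondorcetWinner R x → α ≤ F R x

/-- `x` is Pareto-dominated in `R`. -/
def ParetoDominated {n m : ℕ} (R : Profile n m) (x : Fin m) : Prop :=
  ∃ y, ∀ i, R i y < R i x

/-- `β`-ex post efficiency. -/
def ExPostEff {n m : ℕ} (F : Profile n m → Fin m → ℝ) (β : ℝ) : Prop :=
  ∀ R x, ParetoDominated R x → F R x ≤ β

/-- The probability that the dictatorial SDS of voter `i` assigns to `x`:
`1` if `x` is voter `i`'s most preferred alternative and `0` otherwise. -/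
def dictProb {n m : ℕ} (R : Profile n m) (i : Fin n) (x : Fin m) : ℝ :=
  if ∀ y, R i x ≤ R i y then 1 else 0

/-- `d` is a random dictatorship. -/
def IsRandDict {n m : ℕ} (d : Profile n m → Fin m → ℝ) : Prop :=
  ∃ δ : Fin n → ℝ, (∀ i, 0 ≤ δ i) ∧ ∑ i, δ i = 1 ∧
    ∀ R x, d R x = ∑ i, δ i * dictProb R i x

/-- `F` can be written as `γ d + (1 - γ) g` with `d` a random dictatorship and
`g` a strategyproof SDS. -/
def DecomposesAt {n m : ℕ} (F : Profile n m → Fin m → ℝ) (γ : ℝ) : Prop :=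
  ∃ d g : Profile n m → Fin m → ℝ, IsRandDict d ∧ IsSDS g ∧ Strategyproof g ∧
    ∀ R x, F R x = γ * d R x + (1 - γ) * g R x

/-- `F` is `γ`-randomly dictatorial: `γ ∈ [0,1]` is the maximal value admitting
a decomposition `F = γ d + (1 - γ) g` as above. -/
def RandDictDegree {n m : ℕ} (F : Profile n m → Fin m → ℝ) (γ : ℝ) : Prop :=
  0 ≤ γ ∧ γ ≤ 1 ∧ DecomposesAt F γ ∧
    ∀ γ', 0 ≤ γ' → γ' ≤ 1 → DecomposesAt F γ' → γ' ≤ γ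

/-- The profile `R^{i:yx}` obtained from `R` by swapping `x` and `y` in voter
`i`'s preference relation (used when `x` is ranked directly above `y`). -/
def swapTop {n m : ℕ} (R : Profile n m) (i : Fin n) (x y : Fin m) : Profile n m :=
  Function.update R i ((R i).trans (Equiv.swap (R i x) (R i y)))

/-- The weight vector `b` defining the randomized Copeland rule:
`b k = 2/(m(m-1))` for `k > n/2`, `b k = 1/(m(m-1))` for `k = n/2`, `b k = 0`
for `k < n/2`. -/
def copelandWeight (n m : ℕ) (k : ℕ) : ℝ :=
  if n < 2 * k then 2 / ((m : ℝ) * ((m : ℝ) - 1))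
  else if 2 * k = n then 1 / ((m : ℝ) * ((m : ℝ) - 1))
  else 0

/-- The randomized Copeland rule `f_C(R, x) = ∑_{y ≠ x} b_{n_{xy}(R)}`. -/
def randCopeland (n m : ℕ) : Profile n m → Fin m → ℝ :=
  fun R x => ∑ y ∈ univ.filter (fun y => y ≠ x), copelandWeight n m (suppSize R x y)

/-- A point voting SDS, given by a scoring vector `a` (indexed by ranks
`0, …, m-1`, i.e. `a k` is the score of the `(k+1)`-st ranked alternative). -/
structure PointVoting (n m : ℕ) where
  a : ℕ → ℝ
  mono : ∀ k l : ℕ, k ≤ l → l < m → a l ≤ a k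
  nonneg : ∀ k : ℕ, k < m → 0 ≤ a k
  sum_eq : ∑ k ∈ Finset.range m, a k = 1 / (n : ℝ)

/-- The value of a point voting SDS. -/
def pvVal {n m : ℕ} (pv : PointVoting n m) : Profile n m → Fin m → ℝ :=
  fun R x => ∑ i, pv.a (R i x : ℕ)

/-- A supporting size SDS, given by a vector `b` indexed by supporting sizes
`0, …, n`. -/
structure SupportingSize (n m : ℕ) where
  b : ℕ → ℝ
  mono : ∀ k l : ℕ, k ≤ l → l ≤ n → b k ≤ b l
  nonneg : ∀ k : ℕ, k ≤ n → 0 ≤ b k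
  pair_eq : ∀ k : ℕ, k ≤ n → b k + b (n - k) = 2 / ((m : ℝ) * ((m : ℝ) - 1))

/-- The value of a supporting size SDS. -/
def ssVal {n m : ℕ} (S : SupportingSize n m) : Profile n m → Fin m → ℝ :=
  fun R x => ∑ y ∈ univ.filter (fun y => y ≠ x), S.b (suppSize R x y)

/-- A duple: a strategyproof SDS that puts positive probability on at most two
fixed alternatives. -/
def IsDuple {n m : ℕ} (g : Profile n m → Fin m → ℝ) : Prop :=
  IsSDS g ∧ Strategyproof g ∧ ∃ x y : Fin m, ∀ R z, z ≠ x → z ≠ y → g R z = 0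

/-- A unilateral: a strategyproof SDS that depends only on the preferences of a
single fixed voter. -/
def IsUnilateral {n m : ℕ} (g : Profile n m → Fin m → ℝ) : Prop :=
  IsSDS g ∧ Strategyproof g ∧
    ∃ i : Fin n, ∀ R R' : Profile n m, R i = R' i → g R = g R'

/-- `F` is a convex combination of SDSs satisfying the property `P`. -/
def MixOf {n m : ℕ} (P : (Profile n m → Fin m → ℝ) → Prop)
    (F : Profile n m → Fin m → ℝ) : Prop :=
  ∃ (K : ℕ) (w : Fin K → ℝ) (g : Fin K → Profile n m → Fin m → ℝ),
    (∀ k, 0 ≤ w k) ∧ ∑ k, w k = 1 ∧ (∀ k, P (g k)) ∧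
    ∀ R x, F R x = ∑ k, w k * g k R x

/-- The uniform random dictatorship. -/
def uniformRD (n m : ℕ) : Profile n m → Fin m → ℝ :=
  fun R x => (1 / (n : ℝ)) * ∑ i, dictProb R i x

/-- The uniform lottery. -/
def uniformLottery (n m : ℕ) : Profile n m → Fin m → ℝ :=
  fun _ _ => 1 / (m : ℝ)

/-!
For each voter, let `T(U)` be the mass that their part of `F` puts on the set `U` when they rank
`U` on top. Strategyproofness makes `T` submodular, so the gaps `T{x} + T{y} - T{x, y}` are
nonnegative. If all gaps of a voter were positive, a multiple of the dictatorship of that voter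
could be split off from `F`; hence each voter `i` has a pair `p i` with gap zero, and swapping this
pair at the top of the ranking of `i` does not change `F`.

The new rule has one voter for each pair of alternatives. It averages `F` over all relabelings `τ`
of the alternatives, where the voter of the pair `τ (p i)` stands in for `i`. Averaging is linear,
and it makes the rule equivariant: the part of any pair is determined by the part of the pair of
the two best ranks. This yields one constant `δ` and one scoring vector for all voters.
-/

open Equiv (Perm swap)
open scoped Pointwise BigOperators

/-- `U` consists of the `#U` best alternatives of the ranking `σ`. -/
def IsTopSet {m : ℕ} (σ : Perm (Fin m)) (U : Finset (Fin m)) : Prop :=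
  ∀ y ∈ U, ∀ z ∉ U, σ y < σ z

section IsTopSet

variable {m : ℕ} {σ : Perm (Fin m)} {U V W : Finset (Fin m)}

lemma isTopSet_filter_lt (σ : Perm (Fin m)) (x : Fin m) : IsTopSet σ {y | σ y < σ x} := by
  intro y hy z hz
  simp only [mem_filter_univ, not_lt] at hy hz
  exact hy.trans_le hz

lemma isTopSet_insert_filter_lt (σ : Perm (Fin m)) (x : Fin m) :
    IsTopSet σ (insert x (univ.filter fun y => σ y < σ x)) := by
  intro y hy z hz
  simp only [mem_insert, mem_filter_univ, not_or, not_lt] at hy hz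
  have hxz : σ x < σ z := hz.2.lt_of_ne fun h => hz.1 (σ.injective h.symm)
  rcases hy with rfl | hy
  exacts [hxz, hy.trans hxz]

lemma IsTopSet.eq_univ_or_eq_filter_lt (hU : IsTopSet σ U) :
    U = univ ∨ ∃ x, U = univ.filter fun y => σ y < σ x := by
  rcases Uᶜ.eq_empty_or_nonempty with hc | hc
  · exact .inl (by simpa using hc)
  · obtain ⟨x, hx, hmin⟩ := exists_min_image Uᶜ σ hc
    refine .inr ⟨x, ext fun y => ?_⟩
    rw [mem_filter_univ]
    refine ⟨fun hy => hU y hy x (mem_compl.mp hx), fun hy => ?_⟩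
    by_contra hyU
    exact (hmin y (mem_compl.mpr hyU)).not_gt hy

lemma isTopSet_mul {τ : Perm (Fin m)} : IsTopSet (σ * τ) U ↔ IsTopSet σ (τ • U) := by
  refine ⟨fun h y hy z hz => ?_, fun h y hy z hz => ?_⟩
  · rw [← inv_smul_mem_iff] at hy hz
    simpa using h _ hy _ hz
  · exact h (τ • y) (smul_mem_smul_finset hy) (τ • z) (by rwa [smul_mem_smul_finset_iff])

lemma swap_smul_finset_eq_self {α : Type*} [DecidableEq α] {V : Finset α} {x y : α}
    (hxy : x ∈ V ↔ y ∈ V) : swap x y • V = V := by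
  refine eq_of_subset_of_card_le (fun z hz => ?_) (card_smul_finset _ _).ge
  rw [← inv_smul_mem_iff, Equiv.swap_inv, Equiv.Perm.smul_def, Equiv.swap_apply_def] at hz
  grind

lemma IsTopSet.mul_swap {x y : Fin m} (hU : IsTopSet σ U) (hxy : x ∈ U ↔ y ∈ U) :
    IsTopSet (σ * swap x y) U := by
  rwa [isTopSet_mul, swap_smul_finset_eq_self hxy]

lemma IsTopSet.val_lt_card (hU : IsTopSet σ U) {x : Fin m} (hx : x ∈ U) : (σ x : ℕ) < #U := by
  have hsub : (univ.filter fun y => σ y ≤ σ x) ⊆ U := by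
    intro y hy
    by_contra hyU
    exact ((mem_filter_univ y).mp hy).not_gt (hU x hx y hyU)
  have hcard : #(univ.filter fun y => σ y ≤ σ x) = (σ x : ℕ) + 1 := by
    rw [← Fin.card_Iic]
    exact card_equiv σ (by simp)
  have := card_le_card hsub
  omega

lemma smul_eq_filter_val_lt_card (h : ∀ x ∈ U, (σ x : ℕ) < #U) :
    σ • U = univ.filter fun r : Fin m => (r : ℕ) < #U := by
  refine eq_of_subset_of_card_le (fun r hr => ?_) ?_
  · rw [← inv_smul_mem_iff] at hr
    simpa using h _ hr
  · rw [card_smul_finset, Fin.card_filter_val_lt]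
    exact min_le_right _ _

lemma isTopSet_iff_val_lt_card : IsTopSet σ U ↔ ∀ x ∈ U, (σ x : ℕ) < #U := by
  refine ⟨fun hU x hx => hU.val_lt_card hx, fun h y hy z hz => ?_⟩
  have hσz : σ • z ∉ σ • U := by rwa [smul_mem_smul_finset_iff]
  rw [smul_eq_filter_val_lt_card h, mem_filter_univ, not_lt] at hσz
  exact Fin.lt_def.mpr ((h y hy).trans_le hσz)

lemma isTopSet_singleton_iff {x : Fin m} : IsTopSet σ {x} ↔ (σ x : ℕ) = 0 := by
  simp [isTopSet_iff_val_lt_card]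

lemma isTopSet_pair_iff {x y : Fin m} (hxy : x ≠ y) :
    IsTopSet σ {x, y} ↔ (σ x : ℕ) ≤ 1 ∧ (σ y : ℕ) ≤ 1 := by
  simp [isTopSet_iff_val_lt_card, card_pair hxy]

lemma isTopSet_pair_of_val_eq {x y : Fin m} (hx : (σ x : ℕ) = 0) (hy : (σ y : ℕ) = 1) :
    IsTopSet σ {x, y} := by
  refine (isTopSet_pair_iff ?_).mpr ⟨by omega, by omega⟩
  rintro rfl
  omega

lemma exists_isTopSet_chain (hUV : U ⊆ V) (hVW : V ⊆ W) :
    ∃ σ, IsTopSet σ U ∧ IsTopSet σ V ∧ IsTopSet σ W := by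
  let level (x : Fin m) : ℕ := if x ∈ U then 0 else if x ∈ V then 1 else if x ∈ W then 2 else 3
  have sort_lt {x y : Fin m} (h : level x < level y) :
      (Tuple.sort level).symm x < (Tuple.sort level).symm y := by
    contrapose! h
    simpa using Tuple.monotone_sort level h
  refine ⟨(Tuple.sort level).symm, ?_, ?_, ?_⟩ <;>
    exact fun x hx y hy => sort_lt (by grind)

lemma exists_ranking_zero_one {x y : Fin m} (hxy : x ≠ y) :
    ∃ σ : Perm (Fin m), (σ x : ℕ) = 0 ∧ (σ y : ℕ) = 1 := by
  obtain ⟨σ, hx, hxy', -⟩ := exists_isTopSet_chain (U := {x}) (V := {x, y}) (by simp) subset_rfl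
  rw [isTopSet_singleton_iff] at hx
  rw [isTopSet_pair_iff hxy] at hxy'
  have hne : (σ x : ℕ) ≠ σ y := fun h => hxy (σ.injective (Fin.ext h))
  exact ⟨σ, hx, by omega⟩

end IsTopSet

lemma SDPref.sum_le_sum {n m : ℕ} {R : Profile n m} {i : Fin n} {p q : Fin m → ℝ}
    (h : SDPref R i p q) (hpq : ∑ x, p x = ∑ x, q x) {U : Finset (Fin m)}
    (hU : IsTopSet (R i) U) : ∑ x ∈ U, q x ≤ ∑ x ∈ U, p x := by
  rcases hU.eq_univ_or_eq_filter_lt with rfl | ⟨x, rfl⟩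
  exacts [hpq.ge, h x]

/-- `u` is `L` times a unilateral, written as a function of the ranking of the one voter it
depends on. Strategyproofness is stated for all top sets of the voter's true ranking `σ`. -/
structure IsWeightedUnilateral {m : ℕ} (u : Perm (Fin m) → Fin m → ℝ) (L : ℝ) : Prop where
  nonneg : ∀ σ x, 0 ≤ u σ x
  sum_eq : ∀ σ, ∑ x, u σ x = L
  sum_le : ∀ ⦃σ U⦄, IsTopSet σ U → ∀ σ', ∑ x ∈ U, u σ' x ≤ ∑ x ∈ U, u σ x

/-- The mass that `u` puts on `U` at the rankings that have `U` on top, encoded as the maximal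
mass that `u` puts on `U` at any ranking. -/
def topMass {m : ℕ} (u : Perm (Fin m) → Fin m → ℝ) (U : Finset (Fin m)) : ℝ :=
  ⨆ σ, ∑ x ∈ U, u σ x

/-- The mass that `u` moves between `x` and `y` when they are swapped at the top of a ranking. -/
def dictGap {m : ℕ} (u : Perm (Fin m) → Fin m → ℝ) (x y : Fin m) : ℝ :=
  topMass u {x} + topMass u {y} - topMass u {x, y}

/-- Reordering the alternatives in `s` at the top of a ranking does not affect `u`. For a pair
`s = {x, y}` this says that `u` is `0`-randomly dictatorial for `x, y`. -/
def TopSwapInvariant {m : ℕ} (u : Perm (Fin m) → Fin m → ℝ) (s : Finset (Fin m)) : Prop :=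
  ∀ σ, IsTopSet σ s → ∀ x ∈ s, ∀ y ∈ s, u (σ * swap x y) = u σ

lemma sum_le_topMass {m : ℕ} (u : Perm (Fin m) → Fin m → ℝ) (σ : Perm (Fin m))
    (U : Finset (Fin m)) : ∑ x ∈ U, u σ x ≤ topMass u U :=
  le_ciSup (f := fun σ => ∑ x ∈ U, u σ x) (Set.finite_range _).bddAbove σ

namespace IsWeightedUnilateral

variable {m : ℕ} {u : Perm (Fin m) → Fin m → ℝ} {L : ℝ} {σ σ' : Perm (Fin m)}
  {U V : Finset (Fin m)} {x y z : Fin m}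

section TopMass

lemma sum_eq_topMass (hu : IsWeightedUnilateral u L) (hU : IsTopSet σ U) :
    ∑ x ∈ U, u σ x = topMass u U :=
  (sum_le_topMass u σ U).antisymm (ciSup_le (hu.sum_le hU))

lemma topMass_mono (hu : IsWeightedUnilateral u L) (hUV : U ⊆ V) : topMass u U ≤ topMass u V :=
  ciSup_mono (Set.finite_range _).bddAbove fun σ =>
    sum_le_sum_of_subset_of_nonneg hUV fun x _ _ => hu.nonneg σ x

-- At a ranking with top sets `U ∩ V ⊆ V ⊆ U ∪ V`, the mass on `U` is the left side minus `T(V)`.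
lemma topMass_union_add_topMass_inter_le (hu : IsWeightedUnilateral u L) (U V : Finset (Fin m)) :
    topMass u (U ∪ V) + topMass u (U ∩ V) ≤ topMass u U + topMass u V := by
  obtain ⟨σ, hinter, hV, hunion⟩ :=
    exists_isTopSet_chain (inter_subset_right (s₁ := U) (s₂ := V)) (subset_union_right (s₁ := U))
  rw [← hu.sum_eq_topMass hinter, ← hu.sum_eq_topMass hV, ← hu.sum_eq_topMass hunion,
    sum_union_inter]
  gcongr
  exact sum_le_topMass u σ U

lemma dictGap_nonneg (hu : IsWeightedUnilateral u L) (hxy : x ≠ y) : 0 ≤ dictGap u x y := by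
  have hsub := hu.topMass_union_add_topMass_inter_le {x} {y}
  have hempty : topMass u ∅ = 0 := by simp [topMass]
  rw [singleton_inter_of_notMem (by simpa using hxy), hempty, ← insert_eq] at hsub
  exact sub_nonneg.mpr (by linarith)

lemma dictGap_le_topMass_singleton (hu : IsWeightedUnilateral u L) :
    dictGap u x y ≤ topMass u {x} := by
  have hmono : topMass u {y} ≤ topMass u {x, y} := hu.topMass_mono (by simp)
  unfold dictGap
  linarith

lemma sum_add_dictGap_le_topMass (hu : IsWeightedUnilateral u L) (hy : y ∈ U) (hz : z ∉ U)
    (hσ : IsTopSet σ {z}) : ∑ x ∈ U, u σ x + dictGap u y z ≤ topMass u U := by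
  have hunion : U ∪ {y, z} = insert z U := by grind
  have hinter : U ∩ {y, z} = {y} := by grind
  have hsub := hu.topMass_union_add_topMass_inter_le U {y, z}
  have hinsert := sum_le_topMass u σ (insert z U)
  have htop := hu.sum_eq_topMass hσ
  rw [hunion, hinter] at hsub
  rw [sum_insert hz] at hinsert
  rw [sum_singleton] at htop
  unfold dictGap
  linarith

lemma apply_le_apply (hu : IsWeightedUnilateral u L) (hx : x ∉ U) (hU : IsTopSet σ U)
    (hU' : IsTopSet σ' U) (hxU : IsTopSet σ (insert x U)) : u σ' x ≤ u σ x := by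
  have hle := hu.sum_le hxU σ'
  rw [sum_insert hx, sum_insert hx, hu.sum_eq_topMass hU, hu.sum_eq_topMass hU'] at hle
  exact le_of_add_le_add_right hle

lemma apply_eq_topMass_singleton (hu : IsWeightedUnilateral u L) (hxy : x ≠ y)
    (hgap : dictGap u x y = 0) (hσ : IsTopSet σ {x, y}) : u σ x = topMass u {x} := by
  have hpair := hu.sum_eq_topMass hσ
  rw [sum_pair hxy] at hpair
  have hne : (σ x : ℕ) ≠ σ y := fun h => hxy (σ.injective (Fin.ext h))
  have htop := (isTopSet_pair_iff hxy).mp hσ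
  obtain hx | hy : (σ x : ℕ) = 0 ∨ (σ y : ℕ) = 0 := by omega
  · simpa using hu.sum_eq_topMass (isTopSet_singleton_iff.mpr hx)
  · have hy := hu.sum_eq_topMass (isTopSet_singleton_iff.mpr hy)
    rw [sum_singleton] at hy
    unfold dictGap at hgap
    linarith

lemma apply_mul_swap_of_notMem (hu : IsWeightedUnilateral u L) (hσ : IsTopSet σ {x, y})
    (hz : z ∉ ({x, y} : Finset (Fin m))) : u (σ * swap x y) z = u σ z := by
  have hx : x ∈ univ.filter fun w => σ w < σ z := by simpa using hσ x (by simp) z hz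
  have hy : y ∈ univ.filter fun w => σ w < σ z := by simpa using hσ y (by simp) z hz
  have hbelow := isTopSet_filter_lt σ z
  have hinsert := isTopSet_insert_filter_lt σ z
  have hbelow' := hbelow.mul_swap (iff_of_true hx hy)
  have hinsert' := hinsert.mul_swap (iff_of_true (mem_insert_of_mem hx) (mem_insert_of_mem hy))
  exact (hu.apply_le_apply (by simp) hbelow hbelow' hinsert).antisymm
    (hu.apply_le_apply (by simp) hbelow' hbelow hinsert')

lemma apply_mul_swap_of_dictGap_eq_zero (hu : IsWeightedUnilateral u L) (hxy : x ≠ y)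
    (hgap : dictGap u x y = 0) (hσ : IsTopSet σ {x, y}) : u (σ * swap x y) = u σ := by
  have hσ' : IsTopSet (σ * swap x y) {x, y} := hσ.mul_swap (by simp)
  have hgap' : dictGap u y x = 0 := by rw [← hgap, dictGap, dictGap, pair_comm, add_comm]
  funext z
  by_cases hz : z ∈ ({x, y} : Finset (Fin m))
  · rw [mem_insert, mem_singleton] at hz
    rcases hz with rfl | rfl
    · rw [hu.apply_eq_topMass_singleton hxy hgap hσ, hu.apply_eq_topMass_singleton hxy hgap hσ']
    · rw [pair_comm] at hσ hσ'
      rw [hu.apply_eq_topMass_singleton hxy.symm hgap' hσ,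
        hu.apply_eq_topMass_singleton hxy.symm hgap' hσ']
  · exact hu.apply_mul_swap_of_notMem hσ hz

lemma topSwapInvariant_of_dictGap_eq_zero (hu : IsWeightedUnilateral u L) (hxy : x ≠ y)
    (hgap : dictGap u x y = 0) : TopSwapInvariant u {x, y} := by
  have hswap := fun σ => hu.apply_mul_swap_of_dictGap_eq_zero (σ := σ) hxy hgap
  intro σ hσ a ha b hb
  simp only [mem_insert, mem_singleton] at ha hb
  rcases ha with rfl | rfl <;> rcases hb with rfl | rfl
  all_goals first
    | exact hswap σ hσ
    | rw [Equiv.swap_comm]; exact hswap σ hσ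
    | rw [Equiv.swap_self]; rfl

end TopMass

end IsWeightedUnilateral

lemma sum_sub_dict {m : ℕ} [NeZero m] (u : Perm (Fin m) → Fin m → ℝ) (ε : ℝ) (σ : Perm (Fin m))
    (U : Finset (Fin m)) :
    ∑ x ∈ U, (u σ x - if σ x = 0 then ε else 0) =
      ∑ x ∈ U, u σ x - if σ⁻¹ 0 ∈ U then ε else 0 := by
  simp only [← Equiv.Perm.eq_inv_iff_eq, sum_sub_distrib, sum_ite_eq']

namespace IsWeightedUnilateral

section Closure

variable {m : ℕ} {u : Perm (Fin m) → Fin m → ℝ} {L : ℝ}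

lemma mass_nonneg (hu : IsWeightedUnilateral u L) : 0 ≤ L :=
  hu.sum_eq 1 ▸ sum_nonneg fun x _ => hu.nonneg 1 x

lemma sum {ι : Type*} {s : Finset ι} {u : ι → Perm (Fin m) → Fin m → ℝ} {L : ι → ℝ}
    (hu : ∀ i ∈ s, IsWeightedUnilateral (u i) (L i)) :
    IsWeightedUnilateral (fun σ x => ∑ i ∈ s, u i σ x) (∑ i ∈ s, L i) where
  nonneg σ x := sum_nonneg fun i hi => (hu i hi).nonneg σ x
  sum_eq σ := by
    rw [sum_comm]
    exact sum_congr rfl fun i hi => (hu i hi).sum_eq σ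
  sum_le σ U hU σ' := by
    rw [sum_comm, sum_comm (s := U)]
    exact sum_le_sum fun i hi => (hu i hi).sum_le hU σ'

lemma const_mul (hu : IsWeightedUnilateral u L) {c : ℝ} (hc : 0 ≤ c) :
    IsWeightedUnilateral (fun σ x => c * u σ x) (c * L) where
  nonneg σ x := mul_nonneg hc (hu.nonneg σ x)
  sum_eq σ := by rw [← mul_sum, hu.sum_eq]
  sum_le σ U hU σ' := by
    rw [← mul_sum, ← mul_sum]
    exact mul_le_mul_of_nonneg_left (hu.sum_le hU σ') hc

lemma expect {ι : Type*} [Fintype ι] {u : ι → Perm (Fin m) → Fin m → ℝ} {L : ι → ℝ}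
    (hu : ∀ i, IsWeightedUnilateral (u i) (L i)) :
    IsWeightedUnilateral (fun σ x => 𝔼 i, u i σ x) (𝔼 i, L i) := by
  simp only [Fintype.expect_eq_sum_div_card, div_eq_inv_mul]
  exact (sum fun i _ => hu i).const_mul (by positivity)

lemma relabel (hu : IsWeightedUnilateral u L) (τ : Perm (Fin m)) :
    IsWeightedUnilateral (fun σ x => u (σ * τ) (τ⁻¹ x)) L := by
  have sum_relabel (U : Finset (Fin m)) (σ : Perm (Fin m)) :
      ∑ x ∈ U, u (σ * τ) (τ⁻¹ x) = ∑ x ∈ τ⁻¹ • U, u (σ * τ) x :=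
    (sum_image (f := u (σ * τ)) (MulAction.injective τ⁻¹).injOn).symm
  refine ⟨fun σ x => hu.nonneg _ _, fun σ => ?_, fun σ U hU σ' => ?_⟩
  · rw [← hu.sum_eq (σ * τ)]
    exact Equiv.sum_comp τ⁻¹ (u (σ * τ))
  · rw [sum_relabel, sum_relabel]
    exact hu.sum_le (isTopSet_mul.mpr (by rwa [smul_inv_smul])) _

lemma const {p : Fin m → ℝ} (hp : ∀ x, 0 ≤ p x) :
    IsWeightedUnilateral (fun _ => p) (∑ x, p x) where
  nonneg _ x := hp x
  sum_eq _ := rfl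
  sum_le _ _ _ _ := le_rfl

lemma exists_eq_mul [NeZero m] (hu : IsWeightedUnilateral u L) :
    ∃ v, IsWeightedUnilateral v 1 ∧ ∀ σ x, u σ x = L * v σ x := by
  rcases eq_or_ne L 0 with rfl | hL
  · have huniform : ∑ _x : Fin m, (m : ℝ)⁻¹ = 1 := by simp
    refine ⟨_, huniform ▸ const fun _ => by positivity, fun σ x => ?_⟩
    rw [zero_mul]
    exact (sum_eq_zero_iff_of_nonneg fun x _ => hu.nonneg σ x).mp (hu.sum_eq σ) x (mem_univ x)
  · refine ⟨_, inv_mul_cancel₀ hL ▸ hu.const_mul (inv_nonneg.mpr hu.mass_nonneg), fun σ x => ?_⟩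
    rw [mul_inv_cancel_left₀ hL]

end Closure

lemma sub_dict {m : ℕ} [NeZero m] {u : Perm (Fin m) → Fin m → ℝ} {L ε : ℝ}
    (hu : IsWeightedUnilateral u L) (hε : 0 ≤ ε) (hsingle : ∀ x, ε ≤ topMass u {x})
    (hgap : ∀ x y, x ≠ y → ε ≤ dictGap u x y) :
    IsWeightedUnilateral (fun σ x => u σ x - if σ x = 0 then ε else 0) (L - ε) := by
  have htop (σ : Perm (Fin m)) : IsTopSet σ {σ⁻¹ 0} := isTopSet_singleton_iff.mpr (by simp)
  refine ⟨fun σ x => ?_, fun σ => ?_, fun σ U hU σ' => ?_⟩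
  · split_ifs with hx
    · have hx_top : IsTopSet σ {x} := isTopSet_singleton_iff.mpr (by simp [hx])
      have hmass := hu.sum_eq_topMass hx_top
      rw [sum_singleton] at hmass
      linarith [hsingle x]
    · simpa using hu.nonneg σ x
  · rw [sum_sub_dict, hu.sum_eq, if_pos (mem_univ _)]
  · rw [sum_sub_dict, sum_sub_dict]
    have hle := hu.sum_le hU σ'
    by_cases hσ : σ⁻¹ 0 ∈ U
    · by_cases hσ' : σ'⁻¹ 0 ∈ U
      · simpa only [hσ, hσ', if_true, sub_le_sub_iff_right] using hle
      · have hgain := hu.sum_add_dictGap_le_topMass hσ hσ' (htop σ')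
        have hε' := hgap (σ⁻¹ 0) (σ'⁻¹ 0) fun h => hσ' (h ▸ hσ)
        rw [if_pos hσ, if_neg hσ', hu.sum_eq_topMass hU]
        linarith
    · rw [if_neg hσ]
      split_ifs <;> linarith

end IsWeightedUnilateral

/-- `F` is the sum of weighted unilaterals `u i`, one for each voter `i`, of mass `L i`. Grouping a
convex combination of unilaterals by voter brings it into this form. -/
structure IsUnilateralDecomposition {n m : ℕ} (F : Profile n m → Fin m → ℝ)
    (u : Fin n → Perm (Fin m) → Fin m → ℝ) (L : Fin n → ℝ) : Prop where
  part : ∀ i, IsWeightedUnilateral (u i) (L i)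
  eq_sum : ∀ R x, F R x = ∑ i, u i (R i) x

lemma sum_apply_update {ι β M : Type*} [Fintype ι] [DecidableEq ι] [AddCommGroup M]
    (φ : ι → β → M) (f : ι → β) (i : ι) (b : β) :
    ∑ j, φ j (Function.update f i b j) = ∑ j, φ j (f j) - φ i (f i) + φ i b := by
  have hrest : ∑ j ∈ univ.erase i, φ j (Function.update f i b j) = ∑ j ∈ univ.erase i, φ j (f j) :=
    sum_congr rfl fun j hj => by rw [Function.update_of_ne (ne_of_mem_erase hj)]
  rw [← add_sum_erase univ _ (mem_univ i), ← add_sum_erase univ (fun j => φ j (f j)) (mem_univ i),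
    hrest, Function.update_self]
  abel

section Profiles

variable {n m : ℕ}

lemma swapTop_eq_update (R : Profile n m) (i : Fin n) (x y : Fin m) :
    swapTop R i x y = Function.update R i (R i * swap x y) := by
  rw [Equiv.mul_swap_eq_swap_mul]
  rfl

lemma dictProb_eq_ite [NeZero m] (R : Profile n m) (i : Fin n) (x : Fin m) :
    dictProb R i x = if R i x = 0 then 1 else 0 := by
  have htop : (∀ y, R i x ≤ R i y) ↔ R i x = 0 :=
    ⟨fun h => by simpa using h ((R i)⁻¹ 0), fun h y => h ▸ Fin.zero_le _⟩
  simp only [dictProb, htop]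

lemma isRandDict_dictProb (i : Fin n) : IsRandDict fun (R : Profile n m) x => dictProb R i x :=
  ⟨Pi.single i 1, fun j => by by_cases h : j = i <;> simp [h], by simp, by simp [Pi.single_apply]⟩

end Profiles

lemma IsUnilateral.exists_isWeightedUnilateral {n m : ℕ} {g : Profile n m → Fin m → ℝ}
    (hg : IsUnilateral g) : ∃ i u, IsWeightedUnilateral u 1 ∧ ∀ R, g R = u (R i) := by
  obtain ⟨hsds, hsp, i, hi⟩ := hg
  refine ⟨i, fun σ => g fun _ => σ,
    ⟨fun σ => hsds.1 _, fun σ => hsds.2 _, fun σ U hU σ' => ?_⟩, fun R => hi _ _ rfl⟩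
  have hdeviate : g (Function.update (fun _ => σ) i σ') = g fun _ => σ' := hi _ _ (by simp)
  have hpref := hsp (fun _ => σ) (Function.update (fun _ => σ) i σ') i
    fun j hj => by rw [Function.update_of_ne hj]
  rw [hdeviate] at hpref
  exact hpref.sum_le_sum (by rw [hsds.2, hsds.2]) hU

lemma IsWeightedUnilateral.isUnilateral {n m : ℕ} {v : Perm (Fin m) → Fin m → ℝ}
    (hv : IsWeightedUnilateral v 1) (i : Fin n) :
    IsUnilateral fun R : Profile n m => v (R i) := by
  refine ⟨⟨fun R => hv.nonneg _, fun R => hv.sum_eq _⟩, fun R R' j hj x => ?_,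
    i, fun R R' h => congrArg v h⟩
  rcases eq_or_ne i j with rfl | hij
  · exact hv.sum_le (isTopSet_filter_lt _ x) _
  · simp only [hj i hij, le_rfl]

lemma MixOf.exists_isUnilateralDecomposition {n m : ℕ} {F : Profile n m → Fin m → ℝ}
    (hF : MixOf IsUnilateral F) : ∃ u L, IsUnilateralDecomposition F u L := by
  obtain ⟨K, w, g, hw, -, hg, hFg⟩ := hF
  choose voter v hv hgv using fun k => (hg k).exists_isWeightedUnilateral
  refine ⟨fun i σ x => ∑ k with voter k = i, w k * v k σ x,
    fun i => ∑ k with voter k = i, w k * 1, fun i => .sum fun k _ => (hv k).const_mul (hw k),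
    fun R x => ?_⟩
  calc F R x = ∑ k, w k * v k (R (voter k)) x := by simp only [hFg, hgv]
    _ = ∑ i, ∑ k with voter k = i, w k * v k (R (voter k)) x := (sum_fiberwise _ _ _).symm
    _ = ∑ i, ∑ k with voter k = i, w k * v k (R i) x :=
      sum_congr rfl fun i _ => sum_congr rfl fun k hk => by rw [(mem_filter_univ k).mp hk]

namespace IsUnilateralDecomposition

variable {n m : ℕ} {F : Profile n m → Fin m → ℝ} {u : Fin n → Perm (Fin m) → Fin m → ℝ}
  {L : Fin n → ℝ}

lemma sum_apply_eq_sum_mass (hF : IsUnilateralDecomposition F u L) (R : Profile n m) :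
    ∑ x, F R x = ∑ i, L i := by
  simp only [hF.eq_sum]
  rw [sum_comm]
  exact sum_congr rfl fun i _ => (hF.part i).sum_eq _

lemma isSDS (hF : IsUnilateralDecomposition F u L) (hL : ∑ i, L i = 1) : IsSDS F :=
  ⟨fun R x => hF.eq_sum R x ▸ sum_nonneg fun i _ => (hF.part i).nonneg _ _,
    fun R => (hF.sum_apply_eq_sum_mass R).trans hL⟩

lemma sum_mass_eq_one (hF : IsUnilateralDecomposition F u L) (hsds : IsSDS F) : ∑ i, L i = 1 :=
  (hF.sum_apply_eq_sum_mass 1).symm.trans (hsds.2 1)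

lemma strategyproof (hF : IsUnilateralDecomposition F u L) : Strategyproof F := by
  intro R R' i hR x
  simp only [hF.eq_sum]
  rw [sum_comm, sum_comm (t := univ)]
  refine sum_le_sum fun j _ => ?_
  rcases eq_or_ne j i with rfl | hj
  · exact (hF.part j).sum_le (isTopSet_filter_lt _ x) _
  · rw [hR j hj]

lemma mixOf_isUnilateral [NeZero m] (hF : IsUnilateralDecomposition F u L)
    (hL : ∑ i, L i = 1) : MixOf IsUnilateral F := by
  choose v hv huv using fun i => (hF.part i).exists_eq_mul
  exact ⟨n, L, fun i R => v i (R i), fun i => (hF.part i).mass_nonneg, hL,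
    fun i => (hv i).isUnilateral i, fun R x => by simp only [hF.eq_sum, huv]⟩

lemma const_mul (hF : IsUnilateralDecomposition F u L) {c : ℝ} (hc : 0 ≤ c) :
    IsUnilateralDecomposition (fun R x => c * F R x) (fun i σ x => c * u i σ x)
      (fun i => c * L i) where
  part i := (hF.part i).const_mul hc
  eq_sum R x := by rw [hF.eq_sum, mul_sum]

lemma update (hF : IsUnilateralDecomposition F u L) (i : Fin n)
    {v : Perm (Fin m) → Fin m → ℝ} {M : ℝ} (hv : IsWeightedUnilateral v M) :
    IsUnilateralDecomposition (fun R x => F R x - u i (R i) x + v (R i) x)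
      (Function.update u i v) (Function.update L i M) where
  part := by
    rw [Function.forall_update_iff _ fun j w => IsWeightedUnilateral w (Function.update L i M j)]
    refine ⟨by simpa using hv, fun j hj => ?_⟩
    simpa [hj] using hF.part j
  eq_sum R x := by
    rw [hF.eq_sum]
    exact (sum_apply_update (fun j w => w (R j) x) u i v).symm

lemma decomposesAt_of_sub_dict [NeZero m] (hF : IsUnilateralDecomposition F u L)
    (hL : ∑ i, L i = 1) {ε : ℝ} (hε : ε < 1) {i : Fin n}
    (hres : IsWeightedUnilateral (fun σ x => u i σ x - if σ x = 0 then ε else 0) (L i - ε)) :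
    DecomposesAt F ε := by
  have hne : 1 - ε ≠ 0 := (sub_pos.mpr hε).ne'
  have hg := (hF.update i hres).const_mul (inv_nonneg.mpr (sub_pos.mpr hε).le)
  have hmass : ∑ j, (1 - ε)⁻¹ * Function.update L i (L i - ε) j = 1 := by
    rw [← mul_sum, sum_apply_update fun _ r => r, inv_mul_eq_one₀ hne, hL]
    ring
  refine ⟨_, _, isRandDict_dictProb i, hg.isSDS hmass, hg.strategyproof, fun R x => ?_⟩
  rw [mul_inv_cancel_left₀ hne, dictProb_eq_ite]
  split_ifs <;> ring

end IsUnilateralDecomposition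

section RandDictDegree

variable {n m : ℕ} {F : Profile n m → Fin m → ℝ}

lemma RandDictDegree.nontrivial (hF : IsSDS F) (hrd : RandDictDegree F 0) :
    Nontrivial (Fin m) := by
  by_contra hm
  have : Subsingleton (Fin m) := not_nontrivial_iff_subsingleton.mp hm
  obtain ⟨-, -, ⟨d, g, ⟨δ, hδ0, hδ1, hd⟩, hg, hsp, -⟩, hmax⟩ := hrd
  refine (hmax 1 zero_le_one le_rfl ⟨d, g, ⟨δ, hδ0, hδ1, hd⟩, hg, hsp, fun R x => ?_⟩).not_gt
    zero_lt_one
  have hdict (i : Fin n) : dictProb R i x = 1 := if_pos fun y => (Subsingleton.elim _ _).le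
  have hF1 : F R x = 1 := (Fintype.sum_subsingleton _ x).symm.trans (hF.2 R)
  simp [hF1, hd, hdict, hδ1]

lemma IsWeightedUnilateral.exists_sub_dict_of_dictGap_ne_zero [NeZero m] [Nontrivial (Fin m)]
    {u : Perm (Fin m) → Fin m → ℝ} {L : ℝ} (hu : IsWeightedUnilateral u L)
    (hgap : ∀ x y, x ≠ y → dictGap u x y ≠ 0) :
    ∃ ε, 0 < ε ∧ ε < 1 ∧
      IsWeightedUnilateral (fun σ x => u σ x - if σ x = 0 then ε else 0) (L - ε) := by
  let distinctPairs := {p : Fin m × Fin m // p.1 ≠ p.2}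
  have : Nonempty distinctPairs := (exists_pair_ne (Fin m)).elim fun x ⟨y, h⟩ => ⟨⟨(x, y), h⟩⟩
  obtain ⟨⟨⟨x₀, y₀⟩, hne⟩, hmin⟩ :=
    Finite.exists_min fun p : distinctPairs => dictGap u p.1.1 p.1.2
  have hpos : 0 < dictGap u x₀ y₀ := (hu.dictGap_nonneg hne).lt_of_ne' (hgap x₀ y₀ hne)
  have hle (x y : Fin m) (hxy : x ≠ y) : min (1 / 2) (dictGap u x₀ y₀) ≤ dictGap u x y :=
    (min_le_right _ _).trans (hmin ⟨(x, y), hxy⟩)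
  have hε : 0 < min (1 / 2) (dictGap u x₀ y₀) := lt_min one_half_pos hpos
  refine ⟨_, hε, (min_le_left _ _).trans_lt one_half_lt_one, hu.sub_dict hε.le (fun x => ?_) hle⟩
  obtain ⟨y, hyx⟩ := exists_ne x
  exact (hle x y hyx.symm).trans hu.dictGap_le_topMass_singleton

lemma IsUnilateralDecomposition.exists_topSwapInvariant_pair [Nontrivial (Fin m)]
    {u : Fin n → Perm (Fin m) → Fin m → ℝ} {L : Fin n → ℝ}
    (hF : IsUnilateralDecomposition F u L) (hL : ∑ i, L i = 1) (hrd : RandDictDegree F 0)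
    (i : Fin n) : ∃ s : Set.powersetCard (Fin m) 2, TopSwapInvariant (u i) s := by
  suffices hgap : ∃ x y, x ≠ y ∧ dictGap (u i) x y = 0 by
    obtain ⟨x, y, hxy, hgap⟩ := hgap
    exact ⟨⟨{x, y}, card_pair hxy⟩, (hF.part i).topSwapInvariant_of_dictGap_eq_zero hxy hgap⟩
  have : NeZero m := ⟨(Classical.arbitrary (Fin m)).pos.ne'⟩
  by_contra! hgap
  obtain ⟨ε, hε0, hε1, hres⟩ := (hF.part i).exists_sub_dict_of_dictGap_ne_zero hgap
  obtain ⟨-, -, -, hmax⟩ := hrd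
  exact (hmax ε hε0.le hε1.le (hF.decomposesAt_of_sub_dict hL hε1 hres)).not_gt hε0

lemma Strategyproof.apply_le_of_isTopSet_singleton {R R' : Profile n m} {i : Fin n} {x : Fin m}
    (hsp : Strategyproof F) (hF : IsSDS F) (hR : ∀ j, j ≠ i → R j = R' j)
    (hx : IsTopSet (R i) {x}) : F R' x ≤ F R x := by
  simpa using (hsp R R' i hR).sum_le_sum (by rw [hF.2, hF.2]) hx

lemma sum_mul_dictProb_swapTop (δ : Fin n → ℝ) {R : Profile n m} {i : Fin n} {x y : Fin m}
    (hxy : x ≠ y) (hx : (R i x : ℕ) = 0) :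
    ∑ j, δ j * dictProb (swapTop R i x y) j x = ∑ j, δ j * dictProb R j x - δ i := by
  have : NeZero m := ⟨x.pos.ne'⟩
  have hx0 : R i x = 0 := Fin.ext hx
  have hy0 : R i y ≠ 0 := fun hy => hxy ((R i).injective (hx0.trans hy.symm))
  simp only [dictProb_eq_ite, swapTop_eq_update]
  rw [sum_apply_update fun j (σ : Perm (Fin m)) => δ j * if σ x = 0 then 1 else 0]
  simp [hx0, hy0]

lemma randDictDegree_zero_of_swapTop_eq [Nonempty (Fin n)] (hF : IsSDS F) (hsp : Strategyproof F)
    (hswap : ∀ i, ∃ x y, x ≠ y ∧ ∃ R : Profile n m, (R i x : ℕ) = 0 ∧ F (swapTop R i x y) = F R) :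
    RandDictDegree F 0 := by
  refine ⟨le_rfl, zero_le_one,
    ⟨_, F, isRandDict_dictProb (Classical.arbitrary _), hF, hsp, by simp⟩, ?_⟩
  rintro γ - hγ1 ⟨d, g, ⟨δ, -, hδ1, hd⟩, hg, hgsp, hdec⟩
  obtain ⟨i, -, hi⟩ : ∃ i ∈ univ, 0 < δ i := exists_lt_of_sum_lt (by simp [hδ1])
  obtain ⟨x, y, hxy, R, hx, hFR⟩ := hswap i
  have hd_swap : d (swapTop R i x y) x = d R x - δ i := by
    rw [hd, hd, sum_mul_dictProb_swapTop δ hxy hx]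
  have hg_swap : g (swapTop R i x y) x ≤ g R x :=
    hgsp.apply_le_of_isTopSet_singleton hg (fun j hj => (Function.update_of_ne hj _ _).symm)
      (isTopSet_singleton_iff.mpr hx)
  have hF_swap := congrFun hFR x
  rw [hdec, hdec, hd_swap] at hF_swap
  have hloss : γ * δ i ≤ 0 := by
    linarith [mul_le_mul_of_nonneg_left hg_swap (sub_nonneg.mpr hγ1)]
  exact nonpos_of_mul_nonpos_left hloss hi

end RandDictDegree

section Averaging

variable {n m N : ℕ} {β : Type*} [MulAction (Perm (Fin m)) β]

/-- The average of `F` over all relabelings `τ` of the alternatives. The voters of the new rule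
are indexed by `β` through `e`; at the relabeling `τ`, the voter indexed by `τ • p i` plays the
role of the voter `i` of `F`. -/
def symmetrization (F : Profile n m → Fin m → ℝ) (p : Fin n → β) (e : Fin N ≃ β)
    (R : Profile N m) (x : Fin m) : ℝ :=
  𝔼 τ : Perm (Fin m), F (fun i => R (e.symm (τ • p i)) * τ) (τ⁻¹ x)

/-- The part of `symmetrization F p e` that depends on the voter indexed by `s`, where `u i` is
the part of `F` that depends on the voter `i`. -/
def averagedPart [DecidableEq β] (u : Fin n → Perm (Fin m) → Fin m → ℝ) (p : Fin n → β) (s : β)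
    (σ : Perm (Fin m)) (x : Fin m) : ℝ :=
  𝔼 τ : Perm (Fin m), ∑ i with τ • p i = s, u i (σ * τ) (τ⁻¹ x)

/-- Relabeling the alternatives by `ρ` turns the part `v s` into the part `v (ρ • s)`. -/
def IsEquivariant (v : β → Perm (Fin m) → Fin m → ℝ) : Prop :=
  ∀ (ρ : Perm (Fin m)) s σ x, v (ρ • s) (σ * ρ⁻¹) (ρ x) = v s σ x

variable {F : Profile n m → Fin m → ℝ} {u : Fin n → Perm (Fin m) → Fin m → ℝ} {L : Fin n → ℝ}
  {p : Fin n → β} {e : Fin N ≃ β}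

lemma ExPostEff.symmetrization {b : ℝ} (hF : ExPostEff F b) :
    ExPostEff (symmetrization F p e) b := by
  rintro R x ⟨y, hy⟩
  refine expect_le univ_nonempty fun τ _ => hF _ _ ⟨τ⁻¹ y, fun i => ?_⟩
  simpa using hy _

lemma IsSDS.symmetrization (hF : IsSDS F) : IsSDS (symmetrization F p e) := by
  refine ⟨fun R x => expect_nonneg fun τ _ => hF.1 _ _, fun R => ?_⟩
  have hsum (τ : Perm (Fin m)) :
      ∑ x, F (fun i => R (e.symm (τ • p i)) * τ) (τ⁻¹ x) = 1 :=
    (Equiv.sum_comp τ⁻¹ _).trans (hF.2 _)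
  simp only [_root_.symmetrization, ← expect_sum_comm, hsum, expect_const univ_nonempty]

lemma isEquivariant_averagedPart [DecidableEq β] : IsEquivariant (averagedPart u p) := by
  intro ρ s σ x
  refine (Fintype.expect_equiv (Equiv.mulLeft ρ) _ _ fun τ => ?_).symm
  simp [mul_smul, mul_assoc]

lemma IsUnilateralDecomposition.symmetrization [DecidableEq β]
    (hF : IsUnilateralDecomposition F u L) :
    IsUnilateralDecomposition (symmetrization F p e) (fun j => averagedPart u p (e j))
      (fun j => 𝔼 τ : Perm (Fin m), ∑ i with τ • p i = e j, L i) where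
  part j := .expect fun τ => .sum fun i _ => (hF.part i).relabel τ
  eq_sum R x := by
    have hvoters (τ : Perm (Fin m)) :
        F (fun i => R (e.symm (τ • p i)) * τ) (τ⁻¹ x) =
          ∑ j, ∑ i with τ • p i = e j, u i (R j * τ) (τ⁻¹ x) := by
      rw [hF.eq_sum, ← sum_fiberwise univ fun i => e.symm (τ • p i)]
      refine sum_congr rfl fun j _ => ?_
      simp only [Equiv.symm_apply_eq]
      refine sum_congr rfl fun i hi => ?_
      rw [(mem_filter_univ i).mp hi, e.symm_apply_apply]
    simp only [_root_.symmetrization, averagedPart, hvoters, expect_sum_comm]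

lemma topSwapInvariant_averagedPart {k : ℕ} {p : Fin n → Set.powersetCard (Fin m) k}
    (hu : ∀ i, TopSwapInvariant (u i) (p i)) (s : Set.powersetCard (Fin m) k) :
    TopSwapInvariant (averagedPart u p s) s := by
  intro σ hσ x hx y hy
  funext z
  refine expect_congr rfl fun τ _ => sum_congr rfl fun i hi => ?_
  obtain rfl : τ • p i = s := (mem_filter_univ i).mp hi
  rw [Set.powersetCard.coe_smul] at hσ hx hy
  have hswap : σ * swap x y * τ = σ * τ * swap (τ⁻¹ x) (τ⁻¹ y) := by
    rw [mul_assoc, mul_assoc, ← Equiv.swap_mul_eq_mul_swap]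
  rw [hswap]
  exact congrFun (hu i (σ * τ) (isTopSet_mul.mpr hσ) _ (inv_smul_mem_iff.mpr hx) _
    (inv_smul_mem_iff.mpr hy)) _

end Averaging

section Equivariant

variable {m k : ℕ} {v : Set.powersetCard (Fin m) k → Perm (Fin m) → Fin m → ℝ}
  {s : Set.powersetCard (Fin m) k} {σ : Perm (Fin m)} {x y : Fin m}

/-- The set of the `k` best ranks. -/
def topRanks (hk : k ≤ m) : Set.powersetCard (Fin m) k :=
  ⟨univ.filter fun r => (r : ℕ) < k, by
    rw [Set.powersetCard.mem_iff, Fin.card_filter_val_lt, min_eq_right hk]⟩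

lemma IsTopSet.smul_eq_topRanks (hk : k ≤ m) (hσ : IsTopSet σ s) : σ • s = topRanks hk :=
  Subtype.ext <| (smul_eq_filter_val_lt_card fun _ hx => hσ.val_lt_card hx).trans
    (by rw [Set.powersetCard.card_eq]; rfl)

lemma isTopSet_one_topRanks (hk : k ≤ m) : IsTopSet (1 : Perm (Fin m)) (topRanks hk) := by
  intro y hy z hz
  simp only [topRanks, mem_filter_univ, not_lt] at hy hz
  exact Fin.lt_def.mpr (hy.trans_le hz)

namespace IsEquivariant

lemma apply_eq_apply_topRanks (hv : IsEquivariant v) (hk : k ≤ m) (hσ : IsTopSet σ s)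
    (σ' : Perm (Fin m)) (x : Fin m) : v s σ' x = v (topRanks hk) (σ' * σ⁻¹) (σ x) := by
  rw [← hσ.smul_eq_topRanks hk, hv]

lemma apply_mul_swap (hv : IsEquivariant v) (hxy : x ∈ s.val ↔ y ∈ s.val) :
    v s (σ * swap x y) x = v s σ y := by
  have hs : swap x y • s = s := Subtype.ext (swap_smul_finset_eq_self hxy)
  simpa [hs] using hv (swap x y) s σ y

lemma apply_eq_apply_of_mem (hv : IsEquivariant v) (hinv : TopSwapInvariant (v s) s)
    (hσ : IsTopSet σ s) (hx : x ∈ s.val) (hy : y ∈ s.val) : v s σ x = v s σ y := by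
  rw [← hv.apply_mul_swap (iff_of_true hx hy), hinv σ hσ x hx y hy]

lemma apply_le_apply_of_notMem (hv : IsEquivariant v) {L : ℝ} (hu : IsWeightedUnilateral (v s) L)
    (hx : x ∉ s.val) (hy : y ∉ s.val) (hxy : σ x ≤ σ y) : v s σ y ≤ v s σ x := by
  rw [← hv.apply_mul_swap (iff_of_false hx hy)]
  have hbelow := isTopSet_filter_lt σ x
  refine hu.apply_le_apply (by simp) hbelow (hbelow.mul_swap ?_) (isTopSet_insert_filter_lt σ x)
  simpa using hxy

lemma exists_apply_mul_swap_sub_eq [NeZero m] (hv : IsEquivariant v) (hk : k ≤ m) (i j : ℕ) :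
    ∃ δ : ℝ, ∀ s σ x y, IsTopSet σ s.val → (σ x : ℕ) = i → (σ y : ℕ) = j →
      v s (σ * swap x y) y - v s σ y = δ := by
  refine ⟨v (topRanks hk) (swap (.ofNat m i) (.ofNat m j)) (.ofNat m j) -
    v (topRanks hk) 1 (.ofNat m j), ?_⟩
  rintro s σ x y hσ rfl rfl
  rw [hv.apply_eq_apply_topRanks hk hσ, hv.apply_eq_apply_topRanks hk hσ,
    Equiv.mul_swap_eq_swap_mul]
  simp

lemma exists_scores [NeZero m] (hv : IsEquivariant v) (hk : k ≤ m)
    (hu : ∀ s, ∃ L, IsWeightedUnilateral (v s) L) (hinv : ∀ s, TopSwapInvariant (v s) s) :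
    ∃ a : ℕ → ℝ, (∀ i j, i < k → j < k → a i = a j) ∧
      (∀ i j, k ≤ i → i ≤ j → j < m → a j ≤ a i) ∧ (∀ i, 0 ≤ a i) ∧
      ∀ s σ x, IsTopSet σ s.val → v s σ x = a (σ x) := by
  obtain ⟨L, hL⟩ := hu (topRanks hk)
  refine ⟨fun i => v (topRanks hk) 1 (.ofNat m i), fun i j hi hj => ?_, fun i j hi hij hj => ?_,
    fun i => hL.nonneg _ _, fun s σ x hσ => ?_⟩
  · apply hv.apply_eq_apply_of_mem (hinv _) (isTopSet_one_topRanks hk)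
    · simpa [topRanks, Nat.mod_eq_of_lt (hi.trans_le hk)] using hi
    · simpa [topRanks, Nat.mod_eq_of_lt (hj.trans_le hk)] using hj
  · apply hv.apply_le_apply_of_notMem hL
    · simpa [topRanks, Nat.mod_eq_of_lt (hij.trans_lt hj)] using hi
    · simpa [topRanks, Nat.mod_eq_of_lt hj] using hi.trans hij
    · simpa [Fin.le_def, Nat.mod_eq_of_lt (hij.trans_lt hj), Nat.mod_eq_of_lt hj] using hij
  · simp [hv.apply_eq_apply_topRanks hk hσ]

end IsEquivariant

end Equivariant

namespace IsUnilateralDecomposition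

variable {n m : ℕ} {F : Profile n m → Fin m → ℝ} {u : Fin n → Perm (Fin m) → Fin m → ℝ}
  {L : Fin n → ℝ}

lemma apply_swapTop_sub (hF : IsUnilateralDecomposition F u L) (R : Profile n m) (i : Fin n)
    (x y z : Fin m) :
    F (swapTop R i x y) z - F R z = u i (R i * swap x y) z - u i (R i) z := by
  rw [hF.eq_sum, hF.eq_sum, swapTop_eq_update, sum_apply_update fun j σ => u j σ z]
  ring

lemma apply_swapTop_eq (hF : IsUnilateralDecomposition F u L) {R : Profile n m} {i : Fin n}
    {x y : Fin m} (hinv : TopSwapInvariant (u i) {x, y}) (hR : IsTopSet (R i) {x, y}) :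
    F (swapTop R i x y) = F R := by
  funext z
  rw [← sub_eq_zero, hF.apply_swapTop_sub, hinv (R i) hR x (by simp) y (by simp), sub_self]

lemma randDictDegree_zero [Nonempty (Fin n)] (hF : IsUnilateralDecomposition F u L)
    (hL : ∑ i, L i = 1) (hinv : ∀ i, ∃ x y, x ≠ y ∧ TopSwapInvariant (u i) {x, y}) :
    RandDictDegree F 0 := by
  refine randDictDegree_zero_of_swapTop_eq (hF.isSDS hL) hF.strategyproof fun i => ?_
  obtain ⟨x, y, hxy, hi⟩ := hinv i
  obtain ⟨σ, hx, hy⟩ := exists_ranking_zero_one hxy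
  exact ⟨x, y, hxy, fun _ => σ, hx,
    hF.apply_swapTop_eq hi (isTopSet_pair_of_val_eq hx hy)⟩

end IsUnilateralDecomposition

lemma nonempty_equiv_powersetCard_two (m : ℕ) :
    Nonempty (Fin (m * (m - 1) / 2) ≃ Set.powersetCard (Fin m) 2) := by
  refine ⟨(Finite.equivFinOfCardEq ?_).symm⟩
  rw [Set.powersetCard.card, Nat.card_fin, Nat.choose_two_right]

lemma exists_equivariant_decomposition {n m N : ℕ} [Nontrivial (Fin m)] {b : ℝ}
    {F : Profile n m → Fin m → ℝ} (hF : IsSDS F) (hrd : RandDictDegree F 0) (heff : ExPostEff F b)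
    (hmix : MixOf IsUnilateral F) (e : Fin N ≃ Set.powersetCard (Fin m) 2) :
    ∃ (F' : Profile N m → Fin m → ℝ) (v : Set.powersetCard (Fin m) 2 → Perm (Fin m) → Fin m → ℝ)
      (L : Fin N → ℝ), IsSDS F' ∧ ExPostEff F' b ∧
        IsUnilateralDecomposition F' (fun j => v (e j)) L ∧ IsEquivariant v ∧
        ∀ s, TopSwapInvariant (v s) s := by
  obtain ⟨u, L, hu⟩ := hmix.exists_isUnilateralDecomposition
  choose p hp using hu.exists_topSwapInvariant_pair (hu.sum_mass_eq_one hF) hrd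
  exact ⟨symmetrization F p e, averagedPart u p, _, hF.symmetrization, heff.symmetrization,
    hu.symmetrization, isEquivariant_averagedPart, topSwapInvariant_averagedPart hp⟩

/-- From a strategyproof, `0`-randomly dictatorial, `β`-ex post
efficient mixture of unilaterals on `n` voters, one can construct such an SDS
`F'` on `m(m-1)/2` voters additionally satisfying: (i) every voter `i` is
`0`-randomly dictatorial for a distinct pair `x_i, y_i`; (ii) there is a
constant `δ` describing the probability gain of a third-ranked alternative
swapped to second place past `y_i`; (iii) on profiles where every voter
top-ranks his pair, `F'` is given by a scoring vector `a` with
`a_1 = a_2 ≥ 0` and `a_3 ≥ … ≥ a_m ≥ 0` (here indexed from `0`). -/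
theorem unilateralMix_normal_form (n m : ℕ) (β : ℝ) (hβ0 : 0 ≤ β) (hβ1 : β ≤ 1)
    (F : Profile n m → Fin m → ℝ) (hF : IsSDS F) (hsp : Strategyproof F)
    (hrd : RandDictDegree F 0) (heff : ExPostEff F β)
    (hmix : MixOf IsUnilateral F) :
    ∃ F' : Profile (m * (m - 1) / 2) m → Fin m → ℝ,
      IsSDS F' ∧ Strategyproof F' ∧ RandDictDegree F' 0 ∧ ExPostEff F' β ∧
      MixOf IsUnilateral F' ∧
      ∃ xy : Fin (m * (m - 1) / 2) → Fin m × Fin m,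
        (∀ i, (xy i).1 ≠ (xy i).2) ∧
        (∀ i j, i ≠ j →
          ({(xy i).1, (xy i).2} : Finset (Fin m)) ≠ {(xy j).1, (xy j).2}) ∧
        (∀ (i : Fin (m * (m - 1) / 2)) (R : Profile (m * (m - 1) / 2) m),
          (R i ((xy i).1) : ℕ) = 0 → (R i ((xy i).2) : ℕ) = 1 →
          F' (swapTop R i (xy i).1 (xy i).2) = F' R) ∧
        (∃ δ : ℝ, ∀ (i : Fin (m * (m - 1) / 2)) (a b c : Fin m)
            (R : Profile (m * (m - 1) / 2) m),
          ({a, b} : Finset (Fin m)) = {(xy i).1, (xy i).2} →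
          c ≠ (xy i).1 → c ≠ (xy i).2 →
          (R i a : ℕ) = 0 → (R i b : ℕ) = 1 → (R i c : ℕ) = 2 →
          F' (swapTop R i b c) c - F' R c = δ) ∧
        (∃ a : ℕ → ℝ, a 0 = a 1 ∧ 0 ≤ a 1 ∧
          (∀ k l : ℕ, 2 ≤ k → k ≤ l → l < m → a l ≤ a k) ∧
          (∀ k : ℕ, k < m → 0 ≤ a k) ∧
          ∀ R : Profile (m * (m - 1) / 2) m,
            (∀ i, (R i ((xy i).1) : ℕ) ≤ 1 ∧ (R i ((xy i).2) : ℕ) ≤ 1) →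
            ∀ x, F' R x = ∑ i, a (R i x : ℕ)) := by
  have : Nontrivial (Fin m) := hrd.nontrivial hF
  have hm : 2 ≤ m := Fin.nontrivial_iff_two_le.mp this
  have : NeZero m := ⟨by omega⟩
  obtain ⟨e⟩ := nonempty_equiv_powersetCard_two m
  have : Nonempty (Fin (m * (m - 1) / 2)) := ⟨e.symm (topRanks hm)⟩
  choose x y hxy hpair using fun i => card_eq_two.mp (Set.powersetCard.card_eq (e i))
  obtain ⟨F', v, L, hsds, heff', hv, hequiv, hinv⟩ :=
    exists_equivariant_decomposition hF hrd heff hmix e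
  have hmass := hv.sum_mass_eq_one hsds
  have hinv_pair (i) : TopSwapInvariant (v (e i)) {x i, y i} := hpair i ▸ hinv (e i)
  obtain ⟨δ, hδ⟩ := hequiv.exists_apply_mul_swap_sub_eq hm 1 2
  obtain ⟨a, ha_top, ha_anti, ha_nonneg, ha⟩ := hequiv.exists_scores hm
    (fun s => ⟨_, e.apply_symm_apply s ▸ hv.part (e.symm s)⟩) hinv
  refine ⟨F', hsds, hv.strategyproof,
    hv.randDictDegree_zero hmass fun i => ⟨_, _, hxy i, hinv_pair i⟩, heff',
    hv.mixOf_isUnilateral hmass, fun i => (x i, y i), hxy,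
    fun i j hij h => hij (e.injective (Subtype.ext (by rw [hpair, hpair, h]))),
    fun i R hx hy => hv.apply_swapTop_eq (hinv_pair i) (isTopSet_pair_of_val_eq hx hy),
    ⟨δ, fun i b c d R hbc _ _ hb hc hd => ?_⟩, a, ha_top 0 1 two_pos one_lt_two, ha_nonneg 1,
    ha_anti, fun i _ => ha_nonneg i, fun R hR z => ?_⟩
  · rw [hv.apply_swapTop_sub]
    exact hδ _ _ _ _ (by rw [hpair, ← hbc]; exact isTopSet_pair_of_val_eq hb hc) hc hd
  · rw [hv.eq_sum]
    exact sum_congr rfl fun i _ => ha _ _ _ (hpair i ▸ (isTopSet_pair_iff (hxy i)).mpr (hR i))
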